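/- Let n ≥ 1 and N = {1,…,n}. Let α_j, β_j ∈ ℤ satisfy 0 ≤ α_j ≤ β_j for each j ∈ N, let g : ∏_{j∈N} [α_j, β_j] → ℂ be a smooth function, and let a : ℤ_{≥0}ⁿ → ℂ. Then ∑_{m₁=α₁}^{β₁} ⋯ ∑_{m_n=α_n}^{β_n} g(m₁,…,m_n) a(m₁,…,m_n) = (−1)ⁿ ∑_{A ⊆ N} ∑_{B ⊆ N∖A} (−1)^{|B|} ∫_{∏_{j∈A} [α_j, β_j]} g_{A,B}(x) S_{A,B}(x) dx, where for A = ∅ the integral is interpreted as the single value g_{∅,B} S_{∅,B}. -/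

import Mathlib

open MeasureTheory

noncomputable section

/-- One-variable partial derivative (within the interval `[c,d]`) of a function on `ℝⁿ`,
in the `j`-th coordinate. -/
def pderivI {n : ℕ} (c d : ℝ) (j : Fin n) (f : (Fin n → ℝ) → ℂ) : (Fin n → ℝ) → ℂ :=
  fun x => derivWithin (fun t => f (Function.update x j t)) (Set.Icc c d) (x j)

/-- Mixed partial derivative `∂^{|A|}/∂x_{i₁}⋯∂x_{i_{|A|}}` in the coordinates of `A`,
each taken within the corresponding interval `[α j, β j]`. -/
def mixedDeriv {n : ℕ} (α β : Fin n → ℝ) (A : Finset (Fin n))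
    (f : (Fin n → ℝ) → ℂ) : (Fin n → ℝ) → ℂ :=
  (A.sort (· ≤ ·)).foldr (fun j F => pderivI (α j) (β j) j F) f

/-- The embedding `I_{A,B}` (resp. `Ĩ_{A,B}` when `α` is replaced by `α - 1`):
coordinates in `A` are free, coordinates in `B` are set to `β`, the remaining
coordinates are set to `α`. -/
def embedI {n : ℕ} (α β : Fin n → ℝ) (A B : Finset (Fin n)) (x : Fin n → ℝ) :
    Fin n → ℝ :=
  fun j => if j ∈ A then x j else if j ∈ B then β j else α j

/-- `S(X₁,…,X_n) = ∑_{0 ≤ m₁ ≤ X₁} ⋯ ∑_{0 ≤ m_n ≤ X_n} a(m₁,…,m_n)` (empty ranges give `0`). -/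
def partialSum {n : ℕ} (a : (Fin n → ℕ) → ℂ) (X : Fin n → ℝ) : ℂ :=
  ∑ m ∈ Fintype.piFinset (fun j => Finset.range (⌊X j⌋ + 1).toNat), a m

/-- Extension of a vector indexed by `A` to a vector indexed by `Fin n` (by `0`). -/
def extendA {n : ℕ} (A : Finset (Fin n)) (x : {j // j ∈ A} → ℝ) : Fin n → ℝ :=
  fun j => if h : j ∈ A then x ⟨j, h⟩ else 0

/-!
Both sides are linear in `a`, so `a` may be taken to be a point mass at `p`, for which `S` is the
indicator function of the orthant `{y | p ≤ y}`, a product of one-variable indicators. In one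
variable the fundamental theorem of calculus gives
`∫_α^β φ'(t) 1[p ≤ t] dt - φ(β) 1[p ≤ β] + φ(α) 1[p ≤ α - 1] = -φ(p) 1[α ≤ p ≤ β]`.
Apply this identity in each coordinate in turn: choosing one of the three terms on the left for
every coordinate, the integral for `j ∈ A`, the value at `β` for `j ∈ B` and the value at `α` for
the others, produces the signed sum over `(A, B)`, and each coordinate contributes a factor `-1`
on the right.
-/

lemma sum_powerset_powerset_sdiff_insert {ι M : Type*} [DecidableEq ι] [AddCommMonoid M]
    {s : Finset ι} {j : ι} (hj : j ∉ s) (F : Finset ι → Finset ι → M) :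
    ∑ A ∈ (insert j s).powerset, ∑ B ∈ (insert j s \ A).powerset, F A B
      = ∑ A ∈ s.powerset, ∑ B ∈ (s \ A).powerset,
          (F (insert j A) B + F A (insert j B) + F A B) := by
  rw [Finset.sum_powerset_insert hj, ← Finset.sum_add_distrib]
  refine Finset.sum_congr rfl fun A hA => ?_
  have hjA : j ∉ A := fun h => hj (Finset.mem_powerset.1 hA h)
  rw [Finset.insert_sdiff_of_notMem _ hjA, Finset.insert_sdiff_insert,
    Finset.sdiff_insert_of_notMem hj, Finset.sum_powerset_insert (by simp [hj])]
  simp only [Finset.sum_add_distrib]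
  abel

lemma sum_mul_indicator_of_subset {κ R : Type*} [NonAssocSemiring R] {S T : Finset κ} (h : S ⊆ T)
    (c : κ → R) : ∑ m ∈ T, c m * (S : Set κ).indicator 1 m = ∑ m ∈ S, c m := by
  rw [← Finset.sum_indicator_subset c h]
  simp only [← Set.indicator_mul_right, Pi.one_apply, mul_one]

section Update

variable {ι : Type*} [DecidableEq ι]

lemma update_mem_Icc {X : ι → Type*} [∀ i, Preorder (X i)] {a b y : ∀ i, X i}
    (hy : y ∈ Set.Icc a b) {j : ι} {t : X j} (ht : t ∈ Set.Icc (a j) (b j)) :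
    Function.update y j t ∈ Set.Icc a b :=
  ⟨le_update_iff.2 ⟨ht.1, fun i _ => hy.1 i⟩, update_le_iff.2 ⟨ht.2, fun i _ => hy.2 i⟩⟩

variable [Fintype ι] {E : Type*} [NormedAddCommGroup E] [NormedSpace ℝ E] {k : WithTop ℕ∞}
  {a b : ι → ℝ} {f : (ι → ℝ) → E}

lemma contDiffOn_update_right (hf : ContDiffOn ℝ k f (Set.Icc a b)) {y : ι → ℝ}
    (hy : y ∈ Set.Icc a b) (j : ι) :
    ContDiffOn ℝ k (fun t => f (Function.update y j t)) (Set.Icc (a j) (b j)) :=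
  hf.comp (contDiff_update k y j).contDiffOn fun _ ht => update_mem_Icc hy ht

lemma contDiffOn_update_left (hf : ContDiffOn ℝ k f (Set.Icc a b)) {j : ι} {t : ℝ}
    (ht : t ∈ Set.Icc (a j) (b j)) :
    ContDiffOn ℝ k (fun y => f (Function.update y j t)) (Set.Icc a b) := by
  refine hf.comp (contDiff_pi.2 fun i => ?_).contDiffOn fun y hy => update_mem_Icc hy ht
  rcases eq_or_ne i j with rfl | hij
  · simpa using contDiff_const
  · simpa [hij] using contDiff_apply ℝ ℝ i

end Update

section Calculus

variable {n : ℕ}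

lemma pderivI_comp {c d : ℝ} {j : Fin n} {E : (Fin n → ℝ) → Fin n → ℝ}
    (hE : ∀ x t, E (Function.update x j t) = Function.update (E x) j t)
    (f : (Fin n → ℝ) → ℂ) (x : Fin n → ℝ) :
    pderivI c d j (fun y => f (E y)) x = pderivI c d j f (E x) := by
  have hEj : E x j = x j := by simpa using congrFun (hE x (x j)) j
  simp only [pderivI, hE, hEj]

lemma contDiffOn_pderivI {k : ℕ} {α β : Fin n → ℝ} {f : (Fin n → ℝ) → ℂ}
    (hf : ContDiffOn ℝ (k + 1) f (Set.Icc α β)) (j : Fin n) :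
    ContDiffOn ℝ k (pderivI (α j) (β j) j f) (Set.Icc α β) := by
  rcases eq_or_ne (α j) (β j) with hj | hj
  · -- `derivWithin` over a single point is zero by convention.
    have h0 : pderivI (α j) (β j) j f = fun _ => 0 := by
      funext x
      refine derivWithin_zero_of_not_accPt fun h => Set.Infinite.of_accPt h ?_
      simp [hj]
    rw [h0]
    exact contDiffOn_const
  intro x hx
  obtain ⟨u, hu, hus, -, f', hf', hf'c⟩ :=
    (contDiffWithinAt_succ_iff_hasFDerivWithinAt' (by simp)).1 (hf x hx)
  rw [Set.insert_eq_of_mem hx] at hu hus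
  have hline : ∀ y ∈ u, pderivI (α j) (β j) j f y = f' y (Pi.single j 1) := by
    intro y hy
    have hyj : y j ∈ Set.Icc (α j) (β j) := ⟨(hus hy).1 j, (hus hy).2 j⟩
    have hlt : α j < β j := lt_of_le_of_ne (hyj.1.trans hyj.2) hj
    have hcomp := HasFDerivWithinAt.comp_hasDerivWithinAt_of_eq (y j) (hf' y hy)
      (hasDerivAt_update y j (y j)).hasDerivWithinAt (s := Set.Icc (α j) (β j))
      (fun t ht => update_mem_Icc (hus hy) ht) (Function.update_eq_self j y).symm
    exact hcomp.derivWithin (uniqueDiffOn_Icc hlt _ hyj)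
  exact (hf'c.clm_apply contDiffWithinAt_const).congr_of_eventuallyEq
    (Filter.mem_of_superset hu hline) (hline x (mem_of_mem_nhdsWithin hx hu))

@[simp]
lemma mixedDeriv_empty (α β : Fin n → ℝ) (f : (Fin n → ℝ) → ℂ) : mixedDeriv α β ∅ f = f := by
  simp [mixedDeriv]

lemma mixedDeriv_insert {j : Fin n} {A : Finset (Fin n)} (hj : ∀ i ∈ A, j < i)
    (α β : Fin n → ℝ) (f : (Fin n → ℝ) → ℂ) :
    mixedDeriv α β (insert j A) f = pderivI (α j) (β j) j (mixedDeriv α β A f) := by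
  rw [mixedDeriv, Finset.sort_insert _ (fun i hi => (hj i hi).le) fun h => (hj j h).false]
  rfl

lemma mixedDeriv_comp {A : Finset (Fin n)} {E : (Fin n → ℝ) → Fin n → ℝ}
    (hE : ∀ j ∈ A, ∀ x t, E (Function.update x j t) = Function.update (E x) j t)
    (α β : Fin n → ℝ) (f : (Fin n → ℝ) → ℂ) :
    mixedDeriv α β A (fun y => f (E y)) = fun x => mixedDeriv α β A f (E x) := by
  induction A using Finset.induction_on_min with
  | empty => simp
  | insert j A hj ih =>
    simp only [mixedDeriv_insert hj, ih fun i hi => hE i (Finset.mem_insert_of_mem hi)]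
    exact funext (pderivI_comp (hE j (Finset.mem_insert_self j A)) _)

lemma contDiffOn_mixedDeriv {k : ℕ} {α β : Fin n → ℝ} {A : Finset (Fin n)}
    {f : (Fin n → ℝ) → ℂ} (hf : ContDiffOn ℝ (k + A.card : ℕ) f (Set.Icc α β)) :
    ContDiffOn ℝ k (mixedDeriv α β A f) (Set.Icc α β) := by
  induction A using Finset.induction_on_min generalizing k with
  | empty => simpa using hf
  | insert j A hj ih =>
    rw [mixedDeriv_insert hj]
    refine contDiffOn_pderivI (ih ?_) j
    rwa [Finset.card_insert_of_notMem fun h => (hj j h).false, add_comm A.card, ← add_assoc] at hf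

end Calculus

lemma integral_derivWithin_mul_indicator_Ici {a a' b p : ℝ} (hab : a ≤ b)
    (ha' : p ≤ a' ↔ p < a) {φ : ℝ → ℂ} (hφ : ContDiffOn ℝ 1 φ (Set.Icc a b)) :
    ∫ t in Set.Icc a b, derivWithin φ (Set.Icc a b) t * (Set.Ici p).indicator 1 t
      = φ b * (Set.Ici p).indicator 1 b - φ a * (Set.Ici p).indicator 1 a'
        - (Set.Icc a b).indicator 1 p * φ p := by
  have hcut : ∫ t in Set.Icc a b, derivWithin φ (Set.Icc a b) t * (Set.Ici p).indicator 1 t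
      = ∫ t in Set.Icc (max a p) b, derivWithin φ (Set.Icc a b) t := by
    have hset : Set.Icc (max a p) b = Set.Icc a b ∩ Set.Ici p := by
      rw [← Set.Ici_inter_Iic, ← Set.Ici_inter_Ici, Set.inter_right_comm, Set.Ici_inter_Iic]
    rw [hset, ← setIntegral_indicator measurableSet_Ici]
    simp only [Set.indicator_apply, Pi.one_apply, mul_ite, mul_one, mul_zero]
  rw [hcut]
  rcases lt_or_ge b p with hbp | hpb
  · have hap : ¬ p < a := (hab.trans hbp.le).not_gt
    simp [hbp, hap, ha']
  have hcb : max a p ≤ b := max_le hab hpb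
  have hsub : Set.Icc (max a p) b ⊆ Set.Icc a b := Set.Icc_subset_Icc_left (le_max_left a p)
  have hftc : ∫ t in Set.Icc (max a p) b, derivWithin φ (Set.Icc a b) t = φ b - φ (max a p) := by
    rw [← intervalIntegral.integral_deriv_of_contDiffOn_Icc (hφ.mono hsub) hcb,
      intervalIntegral.integral_of_le hcb, integral_Ioc_eq_integral_Ioo,
      integral_Icc_eq_integral_Ioo]
    refine setIntegral_congr_fun measurableSet_Ioo fun t ht => ?_
    exact derivWithin_of_mem_nhds (Icc_mem_nhds ((le_max_left a p).trans_lt ht.1) ht.2)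
  rw [hftc]
  rcases lt_or_ge p a with hpa | hap
  · simp [hpb, ha', hpa, hpa.le, hpa.not_ge]
  · simp [hpb, ha', hap, hap.not_gt]

section Fubini

variable {ι : Type*} [DecidableEq ι] {X : ι → Type*} [∀ i, MeasurableSpace (X i)]
  {E : Type*} [NormedAddCommGroup E] [NormedSpace ℝ E]

lemma integral_pi_union (μ : ∀ i, Measure (X i)) [∀ i, SigmaFinite (μ i)] {s t : Finset ι}
    (hst : Disjoint s t) (y : ∀ i, X i) (F : (∀ i, X i) → E)
    (hF : Integrable (fun x => F (Function.updateFinset y (s ∪ t) x))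
      (Measure.pi fun i : {i // i ∈ s ∪ t} => μ i)) :
    ∫ x, F (Function.updateFinset y (s ∪ t) x) ∂Measure.pi (fun i : {i // i ∈ s ∪ t} => μ i)
      = ∫ x, ∫ z, F (Function.updateFinset (Function.updateFinset y s x) t z)
          ∂Measure.pi (fun i : {i // i ∈ t} => μ i) ∂Measure.pi (fun i : {i // i ∈ s} => μ i) := by
  have hpres := measurePreserving_piFinsetUnion hst μ
  simp_rw [Function.updateFinset_updateFinset hst]
  rw [← hpres.integral_comp']
  exact integral_prod _ (hpres.integrable_comp_of_integrable hF)

lemma integral_pi_insert (μ : ∀ i, Measure (X i)) [∀ i, SigmaFinite (μ i)] {s : Finset ι} {j : ι}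
    (hj : j ∉ s) (y : ∀ i, X i) (F : (∀ i, X i) → E)
    (hF : Integrable (fun x => F (Function.updateFinset y (insert j s) x))
      (Measure.pi fun i : {i // i ∈ insert j s} => μ i)) :
    ∫ x, F (Function.updateFinset y (insert j s) x)
        ∂Measure.pi (fun i : {i // i ∈ insert j s} => μ i)
      = ∫ x, ∫ t, F (Function.update (Function.updateFinset y s x) j t) ∂μ j
          ∂Measure.pi (fun i : {i // i ∈ s} => μ i) := by
  rw [Finset.insert_eq, Finset.union_comm] at hF ⊢
  rw [integral_pi_union μ (Finset.disjoint_singleton_right.2 hj) y F hF]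
  simp_rw [Function.updateFinset_singleton]
  refine integral_congr_ae (.of_forall fun x => ?_)
  exact (measurePreserving_piUnique fun i : {i // i ∈ ({j} : Finset ι)} => μ i).integral_comp'
    fun t => F (Function.update (Function.updateFinset y s x) j t)

end Fubini

section Faces

variable {n : ℕ} {α α' β p : Fin n → ℝ} {A B s : Finset (Fin n)} {j : Fin n}

/-- Indicator function of the orthant `{y | ∀ j ∈ s, p j ≤ y j}`. For `s = univ` it is the function
`S` of the coefficients `a` that form a unit point mass at `p`. -/
def orthantIndicator (p : Fin n → ℝ) (s : Finset (Fin n)) : (Fin n → ℝ) → ℂ :=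
  ((s : Set (Fin n)).pi fun j => Set.Ici (p j)).indicator 1

/-- Integral of `F · w` over the face of the box `∏ [α j, β j]` on which the coordinates in `A` are
free, those in `B` equal `β` and the remaining ones equal `α`. As with `g` and `S` in summation by
parts, `w` is evaluated with `α'` in place of `α`. -/
def faceIntegral (α α' β : Fin n → ℝ) (A B : Finset (Fin n)) (F w : (Fin n → ℝ) → ℂ) : ℂ :=
  ∫ x : {j // j ∈ A} → ℝ in Set.univ.pi (fun j : {j // j ∈ A} => Set.Icc (α j.1) (β j.1)),
    F (embedI α β A B (extendA A x)) * w (embedI α' β A B (extendA A x))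

/-- The sum `∑_{A ⊆ s} ∑_{B ⊆ s ∖ A} (-1)^{|B|} ∫ (∂^A f) w` of the integrals over the faces of the
box in the coordinates of `s`, all other coordinates being set to `α` (to `α'` in `w`). -/
def signedFaceSum (α α' β : Fin n → ℝ) (s : Finset (Fin n)) (f w : (Fin n → ℝ) → ℂ) : ℂ :=
  ∑ A ∈ s.powerset, ∑ B ∈ (s \ A).powerset,
    (-1 : ℂ) ^ B.card * faceIntegral α α' β A B (mixedDeriv α β A f) w

lemma orthantIndicator_insert_update (hj : j ∉ s) (p y : Fin n → ℝ) (t : ℝ) :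
    orthantIndicator p (insert j s) (Function.update y j t)
      = (Set.Ici (p j)).indicator 1 t * orthantIndicator p s y := by
  have hmem : Function.update y j t
        ∈ ((insert j s : Finset (Fin n)) : Set (Fin n)).pi (fun i => Set.Ici (p i))
      ↔ t ∈ Set.Ici (p j) ∧ y ∈ (s : Set (Fin n)).pi fun i => Set.Ici (p i) := by
    simp only [Set.mem_pi, Finset.mem_coe, Finset.forall_mem_insert, Function.update_self]
    refine and_congr_right fun _ => forall₂_congr fun i hi => ?_
    rw [Function.update_of_ne (ne_of_mem_of_not_mem hi hj)]
  by_cases ht : t ∈ Set.Ici (p j) <;>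
    by_cases hy : y ∈ (s : Set (Fin n)).pi fun i => Set.Ici (p i) <;>
    simp only [orthantIndicator, Set.indicator, hmem, ht, hy] <;> simp

lemma measurable_orthantIndicator (p : Fin n → ℝ) (s : Finset (Fin n)) :
    Measurable (orthantIndicator p s) :=
  measurable_one.indicator (MeasurableSet.pi s.countable_toSet fun _ _ => measurableSet_Ici)

lemma norm_orthantIndicator_le_one (p : Fin n → ℝ) (s : Finset (Fin n)) (y : Fin n → ℝ) :
    ‖orthantIndicator p s y‖ ≤ 1 := by
  refine (norm_indicator_le_norm_self _ _).trans ?_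
  simp

lemma embedI_update (hj : j ∈ A) (y : Fin n → ℝ) (t : ℝ) :
    embedI α β A B (Function.update y j t) = Function.update (embedI α β A B y) j t := by
  ext i
  rcases eq_or_ne i j with rfl | hij <;> simp [embedI, *]

lemma embedI_insert_left (hj : j ∉ A) (y : Fin n → ℝ) (t : ℝ) :
    embedI α β (insert j A) B (Function.update y j t)
      = Function.update (embedI α β A B y) j t := by
  ext i
  rcases eq_or_ne i j with rfl | hij <;> simp [embedI, *]

lemma embedI_insert_right (hj : j ∉ A) (y : Fin n → ℝ) :
    embedI α β A (insert j B) y = Function.update (embedI α β A B y) j (β j) := by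
  ext i
  rcases eq_or_ne i j with rfl | hij <;> simp [embedI, *]

lemma embedI_eq_update (hA : j ∉ A) (hB : j ∉ B) (y : Fin n → ℝ) :
    embedI α β A B y = Function.update (embedI α β A B y) j (α j) := by
  ext i
  rcases eq_or_ne i j with rfl | hij <;> simp [embedI, *]

lemma continuous_embedI_extendA (α β : Fin n → ℝ) (A B : Finset (Fin n)) :
    Continuous fun x => embedI α β A B (extendA A x) := by
  refine continuous_pi fun j => ?_
  unfold embedI extendA
  split_ifs <;> fun_prop

lemma embedI_extendA_mem_Icc (hαβ : α ≤ β) {x : {j // j ∈ A} → ℝ}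
    (hx : x ∈ Set.univ.pi fun j : {j // j ∈ A} => Set.Icc (α j.1) (β j.1)) :
    embedI α β A B (extendA A x) ∈ Set.Icc α β := by
  rw [← Set.pi_univ_Icc]
  intro j _
  unfold embedI extendA
  split_ifs with hA
  exacts [hx ⟨j, hA⟩ trivial, Set.right_mem_Icc.2 (hαβ j), Set.left_mem_Icc.2 (hαβ j)]

lemma faceIntegral_mixedDeriv (α α' β : Fin n → ℝ) (A B : Finset (Fin n))
    (f w : (Fin n → ℝ) → ℂ) :
    faceIntegral α α' β A B (mixedDeriv α β A f) w
      = ∫ x : {j // j ∈ A} → ℝ in Set.univ.pi (fun j : {j // j ∈ A} => Set.Icc (α j.1) (β j.1)),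
          mixedDeriv α β A (fun y => f (embedI α β A B y)) (extendA A x)
            * w (embedI α' β A B (extendA A x)) := by
  rw [mixedDeriv_comp fun j hj => embedI_update hj]
  rfl

lemma integrableOn_mul_orthantIndicator (hαβ : α ≤ β) {F : (Fin n → ℝ) → ℂ}
    (hF : ContinuousOn F (Set.Icc α β)) (p : Fin n → ℝ) (s : Finset (Fin n)) :
    IntegrableOn (fun x : {j // j ∈ A} → ℝ => F (embedI α β A B (extendA A x))
        * orthantIndicator p s (embedI α' β A B (extendA A x)))
      (Set.univ.pi fun j : {j // j ∈ A} => Set.Icc (α j.1) (β j.1)) := by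
  refine Integrable.mul_bdd (c := 1) ?_ ?_ (.of_forall fun x => norm_orthantIndicator_le_one _ _ _)
  · exact ContinuousOn.integrableOn_compact (isCompact_univ_pi fun _ => isCompact_Icc)
      (hF.comp (continuous_embedI_extendA α β A B).continuousOn
        fun x hx => embedI_extendA_mem_Icc hαβ hx)
  · exact ((measurable_orthantIndicator p s).comp
      (continuous_embedI_extendA α' β A B).measurable).aestronglyMeasurable

lemma faceIntegral_insert_right (hj : j ∉ A) (F w : (Fin n → ℝ) → ℂ) :
    faceIntegral α α' β A (insert j B) F w
      = faceIntegral α α' β A B (fun y => F (Function.update y j (β j)))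
          (fun y => w (Function.update y j (β j))) := by
  simp only [faceIntegral, embedI_insert_right hj]

lemma faceIntegral_eq_update (hA : j ∉ A) (hB : j ∉ B) (F w : (Fin n → ℝ) → ℂ) :
    faceIntegral α α' β A B F w
      = faceIntegral α α' β A B (fun y => F (Function.update y j (α j)))
          (fun y => w (Function.update y j (α' j))) := by
  simp only [faceIntegral, ← embedI_eq_update hA hB]

lemma faceIntegral_insert_left (hj : j ∉ A) {F w : (Fin n → ℝ) → ℂ}
    (hF : IntegrableOn (fun x : {i // i ∈ insert j A} → ℝ =>
        F (embedI α β (insert j A) B (extendA (insert j A) x))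
          * w (embedI α' β (insert j A) B (extendA (insert j A) x)))
      (Set.univ.pi fun i : {i // i ∈ insert j A} => Set.Icc (α i.1) (β i.1))) :
    faceIntegral α α' β (insert j A) B F w
      = ∫ x : {i // i ∈ A} → ℝ in Set.univ.pi (fun i : {i // i ∈ A} => Set.Icc (α i.1) (β i.1)),
          ∫ t in Set.Icc (α j) (β j),
            F (Function.update (embedI α β A B (extendA A x)) j t)
              * w (Function.update (embedI α' β A B (extendA A x)) j t) := by
  have hpi : ∀ C : Finset (Fin n), (volume : Measure ({i // i ∈ C} → ℝ)).restrict
        (Set.univ.pi fun i : {i // i ∈ C} => Set.Icc (α i.1) (β i.1))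
      = Measure.pi fun i : {i // i ∈ C} => volume.restrict (Set.Icc (α i.1) (β i.1)) :=
    fun C => Measure.restrict_pi_pi _ _
  rw [IntegrableOn, hpi] at hF
  rw [faceIntegral, hpi, hpi]
  simp only [← embedI_insert_left hj]
  exact integral_pi_insert (fun i => volume.restrict (Set.Icc (α i) (β i))) hj 0
    (fun y => F (embedI α β (insert j A) B y) * w (embedI α' β (insert j A) B y)) hF

lemma integral_pderivI_mul_orthantIndicator (hj : j ∉ s) (hαβ : α j ≤ β j)
    (hp : p j ≤ α' j ↔ p j < α j) {F : (Fin n → ℝ) → ℂ} (hF : ContDiffOn ℝ 1 F (Set.Icc α β))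
    {y : Fin n → ℝ} (hy : y ∈ Set.Icc α β) (y' : Fin n → ℝ) :
    ∫ t in Set.Icc (α j) (β j), pderivI (α j) (β j) j F (Function.update y j t)
        * orthantIndicator p (insert j s) (Function.update y' j t)
      = F (Function.update y j (β j))
          * orthantIndicator p (insert j s) (Function.update y' j (β j))
        - F (Function.update y j (α j))
          * orthantIndicator p (insert j s) (Function.update y' j (α' j))
        - (Set.Icc (α j) (β j)).indicator 1 (p j) * F (Function.update y j (p j))
          * orthantIndicator p s y' := by
  simp only [orthantIndicator_insert_update hj, ← mul_assoc, ← sub_mul]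
  rw [integral_mul_const,
    ← integral_derivWithin_mul_indicator_Ici hαβ hp (contDiffOn_update_right hF hy j)]
  simp [pderivI]

lemma integrableOn_update_mul_orthantIndicator (hαβ : α ≤ β) (hj : j ∉ s)
    {F : (Fin n → ℝ) → ℂ} (hF : ContinuousOn F (Set.Icc α β)) {t : ℝ}
    (ht : t ∈ Set.Icc (α j) (β j)) (t' : ℝ) :
    IntegrableOn (fun x : {j // j ∈ A} → ℝ =>
        F (Function.update (embedI α β A B (extendA A x)) j t) * orthantIndicator p (insert j s)
          (Function.update (embedI α' β A B (extendA A x)) j t'))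
      (Set.univ.pi fun j : {j // j ∈ A} => Set.Icc (α j.1) (β j.1)) := by
  have hFt : ContinuousOn (fun y => F (Function.update y j t)) (Set.Icc α β) :=
    contDiffOn_zero.1 (contDiffOn_update_left (contDiffOn_zero.2 hF) ht)
  have h := (integrableOn_mul_orthantIndicator (A := A) (B := B) (α' := α') hαβ hFt p s).mul_const
    ((Set.Ici (p j)).indicator 1 t')
  simp only [orthantIndicator_insert_update hj]
  refine h.congr (.of_forall fun x => ?_)
  ring

lemma faceIntegral_insert_pderivI (hαβ : α ≤ β) (hp : p j ≤ α' j ↔ p j < α j) (hs : j ∉ s)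
    (hA : j ∉ A) (hB : j ∉ B) {F : (Fin n → ℝ) → ℂ} (hF : ContDiffOn ℝ 1 F (Set.Icc α β)) :
    faceIntegral α α' β (insert j A) B (pderivI (α j) (β j) j F) (orthantIndicator p (insert j s))
      = faceIntegral α α' β A (insert j B) F (orthantIndicator p (insert j s))
        - faceIntegral α α' β A B F (orthantIndicator p (insert j s))
        - (Set.Icc (α j) (β j)).indicator 1 (p j) * faceIntegral α α' β A B
            (fun y => F (Function.update y j (p j))) (orthantIndicator p s) := by
  have hdF : ContinuousOn (pderivI (α j) (β j) j F) (Set.Icc α β) :=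
    (contDiffOn_pderivI (k := 0) (by simpa using hF) j).continuousOn
  rw [faceIntegral_insert_left hA (integrableOn_mul_orthantIndicator hαβ hdF p (insert j s)),
    faceIntegral_insert_right hA, faceIntegral_eq_update hA hB F]
  have hint := fun {t} ht t' => integrableOn_update_mul_orthantIndicator (A := A) (B := B) (p := p)
    (α' := α') hαβ hs hF.continuousOn (t := t) ht t'
  have hβ := hint (Set.right_mem_Icc.2 (hαβ j)) (β j)
  have hα := hint (Set.left_mem_Icc.2 (hαβ j)) (α' j)
  rw [setIntegral_congr_fun (MeasurableSet.univ_pi fun _ => measurableSet_Icc) fun x hx =>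
    integral_pderivI_mul_orthantIndicator hs (hαβ j) hp hF (embedI_extendA_mem_Icc hαβ hx) _]
  by_cases hpj : p j ∈ Set.Icc (α j) (β j)
  · simp only [Set.indicator_of_mem hpj, Pi.one_apply, one_mul]
    have hslice := integrableOn_mul_orthantIndicator (A := A) (B := B) (α' := α') hαβ
      (contDiffOn_update_left hF hpj).continuousOn p s
    exact (integral_sub (hβ.sub hα) hslice).trans (congrArg (· - _) (integral_sub hβ hα))
  · simp only [Set.indicator_of_notMem hpj, zero_mul, sub_zero]
    exact integral_sub hβ hα

lemma signedFaceSum_insert (hαβ : α ≤ β) (hp : p j ≤ α' j ↔ p j < α j) (hj : ∀ i ∈ s, j < i)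
    {f : (Fin n → ℝ) → ℂ} (hf : ContDiffOn ℝ (s.card + 1 : ℕ) f (Set.Icc α β)) :
    signedFaceSum α α' β (insert j s) f (orthantIndicator p (insert j s))
      = -((Set.Icc (α j) (β j)).indicator 1 (p j) * signedFaceSum α α' β s
          (fun y => f (Function.update y j (p j))) (orthantIndicator p s)) := by
  have hjs : j ∉ s := fun h => (hj j h).false
  have hslice : ∀ A ⊆ s, mixedDeriv α β A (fun y => f (Function.update y j (p j)))
      = fun y => mixedDeriv α β A f (Function.update y j (p j)) := fun A hA =>
    mixedDeriv_comp (fun i hi x t =>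
      Function.update_comm (ne_of_mem_of_not_mem (hA hi) hjs) t (p j) x) α β f
  have hterm : ∀ A ∈ s.powerset, ∀ B ∈ (s \ A).powerset,
      (-1 : ℂ) ^ B.card * faceIntegral α α' β (insert j A) B (mixedDeriv α β (insert j A) f)
          (orthantIndicator p (insert j s))
        + (-1 : ℂ) ^ (insert j B).card * faceIntegral α α' β A (insert j B) (mixedDeriv α β A f)
          (orthantIndicator p (insert j s))
        + (-1 : ℂ) ^ B.card * faceIntegral α α' β A B (mixedDeriv α β A f)
          (orthantIndicator p (insert j s))
      = -((Set.Icc (α j) (β j)).indicator 1 (p j) * ((-1 : ℂ) ^ B.card * faceIntegral α α' β A B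
          (mixedDeriv α β A fun y => f (Function.update y j (p j))) (orthantIndicator p s))) := by
    intro A hA B hB
    rw [Finset.mem_powerset] at hA hB
    have hjA : j ∉ A := fun h => hjs (hA h)
    have hjB : j ∉ B := fun h => hjs (Finset.sdiff_subset (hB h))
    have hdf : ContDiffOn ℝ 1 (mixedDeriv α β A f) (Set.Icc α β) := contDiffOn_mixedDeriv
      (k := 1) (hf.of_le (by have := Finset.card_le_card hA; norm_cast; omega))
    rw [mixedDeriv_insert fun i hi => hj i (hA hi),
      faceIntegral_insert_pderivI hαβ hp hjs hjA hjB hdf,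
      Finset.card_insert_of_notMem hjB, pow_succ, hslice A hA]
    ring
  rw [signedFaceSum, sum_powerset_powerset_sdiff_insert hjs,
    Finset.sum_congr rfl fun A hA => Finset.sum_congr rfl (hterm A hA)]
  simp only [signedFaceSum, Finset.sum_neg_distrib, Finset.mul_sum]

lemma signedFaceSum_empty (f w : (Fin n → ℝ) → ℂ) :
    signedFaceSum α α' β ∅ f w = f α * w α' := by
  have hα : ∀ γ : Fin n → ℝ, embedI γ β ∅ ∅ (extendA ∅ fun _ => default) = γ := fun γ => by
    ext
    simp [embedI]
  have hvol : (volume : Measure ({j : Fin n // j ∈ (∅ : Finset (Fin n))} → ℝ))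
      = Measure.dirac default := Measure.pi_of_empty _ _
  rw [signedFaceSum, Finset.powerset_empty, Finset.sum_singleton, Finset.sdiff_self,
    Finset.powerset_empty, Finset.sum_singleton, faceIntegral, hvol,
    Measure.restrict_eq_self_of_ae_mem (by simp), integral_dirac]
  simp [hα]

lemma signedFaceSum_orthantIndicator (hαβ : α ≤ β) (hp : ∀ j ∈ s, p j ≤ α' j ↔ p j < α j)
    {f : (Fin n → ℝ) → ℂ} (hf : ContDiffOn ℝ s.card f (Set.Icc α β)) :
    signedFaceSum α α' β s f (orthantIndicator p s)
      = (-1) ^ s.card * (f (s.piecewise p α)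
          * ((s : Set (Fin n)).pi fun j => Set.Icc (α j) (β j)).indicator 1 p) := by
  induction s using Finset.induction_on_min generalizing f with
  | empty => simp [signedFaceSum_empty, orthantIndicator]
  | insert j s hj ih =>
    have hjs : j ∉ s := fun h => (hj j h).false
    rw [Finset.card_insert_of_notMem hjs] at hf ⊢
    have hind : (Function.eval j ⁻¹' Set.Icc (α j) (β j)).indicator (1 : (Fin n → ℝ) → ℂ) p
      = (Set.Icc (α j) (β j)).indicator 1 (p j) := rfl
    rw [signedFaceSum_insert hαβ (hp j (Finset.mem_insert_self j s)) hj hf, Finset.coe_insert,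
      Set.insert_pi, Set.inter_indicator_one, Pi.mul_apply, hind, Finset.piecewise_insert]
    by_cases hpj : p j ∈ Set.Icc (α j) (β j)
    · rw [ih (fun i hi => hp i (Finset.mem_insert_of_mem hi))
        ((contDiffOn_update_left hf hpj).of_le (by norm_cast; omega)), pow_succ]
      ring
    · simp [hpj]

lemma partialSum_eq_sum_mul_orthantIndicator (a : (Fin n → ℕ) → ℂ) {M : Fin n → ℕ}
    {X : Fin n → ℝ} (hX : ∀ j, X j < M j) :
    partialSum a X = ∑ m ∈ Fintype.piFinset fun j => Finset.range (M j),
      a m * orthantIndicator (fun j => (m j : ℝ)) Finset.univ X := by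
  have hmem : ∀ (j : Fin n) (k : ℕ), k ∈ Finset.range (⌊X j⌋ + 1).toNat ↔ (k : ℝ) ≤ X j :=
    fun j k => by
      rw [Finset.mem_range, Int.lt_toNat, Int.lt_add_one_iff, Int.le_floor, Int.cast_natCast]
  rw [partialSum, ← sum_mul_indicator_of_subset
    (Fintype.piFinset_subset _ (fun j => Finset.range (M j)) fun j k hk =>
      Finset.mem_range.2 (by exact_mod_cast ((hmem j k).1 hk).trans_lt (hX j)))]
  refine Finset.sum_congr rfl fun m _ => congrArg _ (Set.indicator_eq_indicator ?_ rfl)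
  simp only [Finset.mem_coe, Fintype.mem_piFinset, hmem, Finset.coe_univ, Set.mem_univ_pi,
    Set.mem_Ici]

lemma faceIntegral_partialSum (hαβ : α ≤ β) (hα'β : α' ≤ β) {M : Fin n → ℕ} (hM : ∀ j, β j < M j)
    {F : (Fin n → ℝ) → ℂ} (hF : ContinuousOn F (Set.Icc α β)) (a : (Fin n → ℕ) → ℂ) :
    faceIntegral α α' β A B F (partialSum a)
      = ∑ m ∈ Fintype.piFinset fun j => Finset.range (M j),
        a m * faceIntegral α α' β A B F (orthantIndicator (fun j => (m j : ℝ)) Finset.univ) := by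
  simp only [faceIntegral, ← integral_const_mul]
  rw [← integral_finsetSum _ fun m _ =>
    (integrableOn_mul_orthantIndicator hαβ hF _ _).const_mul (a m)]
  refine setIntegral_congr_fun (MeasurableSet.univ_pi fun _ => measurableSet_Icc) fun x hx => ?_
  have hX : ∀ j, embedI α' β A B (extendA A x) j < M j := by
    refine fun j => lt_of_le_of_lt ?_ (hM j)
    unfold embedI extendA
    split_ifs with hA
    exacts [(hx ⟨j, hA⟩ trivial).2, le_rfl, hα'β j]
  simp only [partialSum_eq_sum_mul_orthantIndicator a hX, Finset.mul_sum, mul_left_comm]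

lemma signedFaceSum_partialSum (hαβ : α ≤ β) (hα'β : α' ≤ β) {M : Fin n → ℕ}
    (hM : ∀ j, β j < M j) {f : (Fin n → ℝ) → ℂ} (hf : ContDiffOn ℝ s.card f (Set.Icc α β))
    (a : (Fin n → ℕ) → ℂ) :
    signedFaceSum α α' β s f (partialSum a)
      = ∑ m ∈ Fintype.piFinset fun j => Finset.range (M j),
        a m * signedFaceSum α α' β s f (orthantIndicator (fun j => (m j : ℝ)) Finset.univ) := by
  simp only [signedFaceSum, Finset.mul_sum]
  rw [Finset.sum_comm]
  refine Finset.sum_congr rfl fun A hA => ?_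
  rw [Finset.sum_comm]
  refine Finset.sum_congr rfl fun B _ => ?_
  have hdf : ContDiffOn ℝ (0 : ℕ) (mixedDeriv α β A f) (Set.Icc α β) := contDiffOn_mixedDeriv
    (hf.of_le (by simpa using Finset.card_le_card (Finset.mem_powerset.1 hA)))
  rw [faceIntegral_partialSum hαβ hα'β hM hdf.continuousOn, Finset.mul_sum]
  exact Finset.sum_congr rfl fun m _ => mul_left_comm _ _ _

lemma sum_piFinset_Icc_toNat {α β : Fin n → ℤ} (hα : ∀ j, 0 ≤ α j) (hαβ : ∀ j, α j ≤ β j)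
    (c : (Fin n → ℕ) → ℂ) :
    ∑ m ∈ Fintype.piFinset (fun j => Finset.Icc (α j).toNat (β j).toNat), c m
      = ∑ m ∈ Fintype.piFinset fun j => Finset.range ((β j).toNat + 1),
        c m * (Set.univ.pi fun j => Set.Icc (α j : ℝ) (β j)).indicator 1 fun j => (m j : ℝ) := by
  have hmem : ∀ (j : Fin n) (k : ℕ), k ∈ Finset.Icc (α j).toNat (β j).toNat
      ↔ (k : ℝ) ∈ Set.Icc (α j : ℝ) (β j) := fun j k => by
    have hjα := hα j
    have hcast : (k : ℝ) ∈ Set.Icc (α j : ℝ) (β j) ↔ α j ≤ k ∧ (k : ℤ) ≤ β j := by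
      rw [Set.mem_Icc]
      norm_cast
    rw [hcast, Finset.mem_Icc]
    have hjβ := hαβ j
    omega
  rw [← sum_mul_indicator_of_subset (Fintype.piFinset_subset _
    (fun j => Finset.range ((β j).toNat + 1)) fun j k hk =>
      Finset.mem_range_succ_iff.2 (Finset.mem_Icc.1 hk).2)]
  refine Finset.sum_congr rfl fun m _ => congrArg _ (Set.indicator_eq_indicator ?_ rfl)
  simp only [Finset.mem_coe, Fintype.mem_piFinset, hmem, Set.mem_univ_pi]

lemma sum_piFinset_Icc_mul_eq_signedFaceSum {α β : Fin n → ℤ} (hα : ∀ j, 0 ≤ α j)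
    (hαβ : ∀ j, α j ≤ β j) {g : (Fin n → ℝ) → ℂ}
    (hg : ContDiffOn ℝ n g (Set.univ.pi fun j => Set.Icc (α j : ℝ) (β j)))
    (a : (Fin n → ℕ) → ℂ) :
    ∑ m ∈ Fintype.piFinset (fun j => Finset.Icc (α j).toNat (β j).toNat),
        g (fun j => (m j : ℝ)) * a m
      = (-1) ^ n * signedFaceSum (fun j => (α j : ℝ)) (fun j => (α j : ℝ) - 1)
          (fun j => (β j : ℝ)) Finset.univ g (partialSum a) := by
  have hαβ' : (fun j => (α j : ℝ)) ≤ fun j => (β j : ℝ) := fun j => Int.cast_le.2 (hαβ j)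
  have hα'β : (fun j => (α j : ℝ) - 1) ≤ fun j => (β j : ℝ) := fun j => by linarith [hαβ' j]
  have hβ : ∀ j, (β j : ℝ) < ((β j).toNat + 1 : ℕ) := fun j => by
    exact_mod_cast (Int.self_le_toNat (β j)).trans_lt (lt_add_one _)
  have hα' : ∀ (m : Fin n → ℕ) (j : Fin n), (m j : ℝ) ≤ (α j : ℝ) - 1 ↔ (m j : ℝ) < α j :=
    fun m j => by exact_mod_cast Int.le_sub_one_iff
  have hg' : ContDiffOn ℝ (Finset.univ : Finset (Fin n)).card g
      (Set.Icc (fun j => (α j : ℝ)) fun j => (β j : ℝ)) := by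
    rwa [Finset.card_fin, ← Set.pi_univ_Icc]
  have hsign : (-1 : ℂ) ^ n * (-1) ^ n = 1 := by rw [← mul_pow]; norm_num
  rw [signedFaceSum_partialSum hαβ' hα'β hβ hg', sum_piFinset_Icc_toNat hα hαβ, Finset.mul_sum]
  refine Finset.sum_congr rfl fun m _ => ?_
  rw [signedFaceSum_orthantIndicator hαβ' (fun j _ => hα' m j) hg', Finset.card_fin,
    Finset.piecewise_univ, Finset.coe_univ]
  linear_combination (-(a m * g fun j => (m j : ℝ))
    * (Set.univ.pi fun j => Set.Icc (α j : ℝ) (β j)).indicator 1 fun j => (m j : ℝ)) * hsign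

end Faces

theorem statement_2_general (n : ℕ) (α β : Fin n → ℤ)
    (hα : ∀ j, 0 ≤ α j) (hαβ : ∀ j, α j ≤ β j)
    (g : (Fin n → ℝ) → ℂ)
    (hg : ContDiffOn ℝ n g (Set.univ.pi fun j => Set.Icc (α j : ℝ) (β j)))
    (a : (Fin n → ℕ) → ℂ) :
    ∑ m ∈ Fintype.piFinset (fun j => Finset.Icc (α j).toNat (β j).toNat),
        g (fun j => (m j : ℝ)) * a m
      = (-1 : ℂ) ^ n *
          ∑ A ∈ (Finset.univ : Finset (Fin n)).powerset,
            ∑ B ∈ ((Finset.univ : Finset (Fin n)) \ A).powerset,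
              (-1 : ℂ) ^ B.card *
                ∫ x : {j // j ∈ A} → ℝ in
                    Set.univ.pi (fun j : {j // j ∈ A} => Set.Icc ((α j.1 : ℝ)) ((β j.1 : ℝ))),
                  mixedDeriv (fun j => (α j : ℝ)) (fun j => (β j : ℝ)) A
                      (fun y => g (embedI (fun j => (α j : ℝ)) (fun j => (β j : ℝ)) A B y))
                      (extendA A x) *
                    partialSum a
                      (embedI (fun j => ((α j : ℝ) - 1)) (fun j => (β j : ℝ)) A B
                        (extendA A x)) := by
  rw [sum_piFinset_Icc_mul_eq_signedFaceSum hα hαβ hg]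
  simp only [signedFaceSum, faceIntegral_mixedDeriv]

/-- Lemma 2.9 (repeated summation by parts):
`∑_{m₁=α₁}^{β₁} ⋯ ∑_{m_n=α_n}^{β_n} g(m) a(m)
  = (−1)ⁿ ∑_{A ⊆ N} ∑_{B ⊆ N∖A} (−1)^{|B|} ∫_{∏_{j∈A} [α_j, β_j]} g_{A,B}(x) S_{A,B}(x) dx`,
where `g_{A,B} = ∂^{|A|}(g ∘ I_{A,B})` and `S_{A,B} = S ∘ Ĩ_{A,B}`; for `A = ∅` the
integral is the single value `g_{∅,B} S_{∅,B}` (the empty product measure has mass one). -/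
theorem statement_2 (n : ℕ) (hn : 1 ≤ n) (α β : Fin n → ℤ)
    (hα : ∀ j, 0 ≤ α j) (hαβ : ∀ j, α j ≤ β j)
    (g : (Fin n → ℝ) → ℂ)
    (hg : ContDiffOn ℝ (⊤ : ℕ∞) g (Set.univ.pi fun j => Set.Icc (α j : ℝ) (β j)))
    (a : (Fin n → ℕ) → ℂ) :
    ∑ m ∈ Fintype.piFinset (fun j => Finset.Icc (α j).toNat (β j).toNat),
        g (fun j => (m j : ℝ)) * a m
      = (-1 : ℂ) ^ n *
          ∑ A ∈ (Finset.univ : Finset (Fin n)).powerset,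
            ∑ B ∈ ((Finset.univ : Finset (Fin n)) \ A).powerset,
              (-1 : ℂ) ^ B.card *
                ∫ x : {j // j ∈ A} → ℝ in
                    Set.univ.pi (fun j : {j // j ∈ A} => Set.Icc ((α j.1 : ℝ)) ((β j.1 : ℝ))),
                  mixedDeriv (fun j => (α j : ℝ)) (fun j => (β j : ℝ)) A
                      (fun y => g (embedI (fun j => (α j : ℝ)) (fun j => (β j : ℝ)) A B y))
                      (extendA A x) *
                    partialSum a
                      (embedI (fun j => ((α j : ℝ) - 1)) (fun j => (β j : ℝ)) A B
                        (extendA A x)) :=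
  statement_2_general n α β hα hαβ g (hg.of_le (by exact_mod_cast le_top)) a

end
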